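/- Suppose Assumption A1 holds, the influence network is a star topology with center node 1 (C_{j1} = 1 and C_{ji} = 0 for all j ≠ 1 and all i ≠ 1), and the center node is fully stubborn (a_1 = 0). Let p* be the equilibrium given by p*_i = 1/n for fully stubborn i ≠ 1, p*_i = (1 − √(1 − 4a_i(1 − a_i)/n))/(2a_i) for i ∈ V_p, and p*_1 = 1/n + (1/n)∑_{j ∈ V_p} a_j(1 − p*_j)/(1 − a_j p*_j). Let μ = ∑_{j ∈ V_p} p*_j e_j, ν = ∑_{j ∈ V_f} e_j + ∑_{j ∈ V_p} p*_j e_j, and ν′ = ∑_{j ∈ V_f} e_j + (1/2)∑_{j ∈ V_p} e_j. Then every trajectory of the perception dynamics with reflected appraisals (system (11)) starting from p(0) ∈ Γ_n(0, ν) ∪ Γ_n(μ, ν′) converges exponentially to p* (there exist c > 0 and λ ∈ (0,1) with ‖p(s) − p*‖ ≤ c λ^s for all s). -/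

import Mathlib

/-!
Since `a 0 = 0`, the centre transmits nothing, and since the leaves link only to the centre, the
dynamics decouple. A leaf follows the scalar recursion `x ↦ f x = a x ^ 2 + (1 - a) / n`, and the
centre is the read-out `1 / n + ∑ j, a j / (1 - a j) * (p j - p j ^ 2)` of the previous state of the
leaves (`percMap_leaf`, `percMap_center`).

For a partially stubborn leaf, `pstar j` is the smaller fixed point `L` of its recursion, and
`f x - L = a (x + L) (x - L)`. On `[0, L]` the factor is at most `2 a L`, which is one minus the
square root of a positive discriminant; on `[L, 1/2]` it is at most `a`. Both intervals are invariant,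
so the error decays geometrically (`quadratic_contraction`). A fully stubborn leaf reaches `1 / n`
after one step. The error of the centre is a finite combination of errors and squared errors of the
leaves one step earlier, so it decays at any common rate `r < 1` dominating those of the leaves.
-/

open Matrix Finset

/-- `W(x) = diag(x) + (I - diag(x)) C`. -/
noncomputable def Wmat (n : ℕ) (C : Matrix (Fin n) (Fin n) ℝ) (x : Fin n → ℝ) :
    Matrix (Fin n) (Fin n) ℝ :=
  Matrix.diagonal x + (1 - Matrix.diagonal x) * C

/-- The map of system (11): `p ↦ (I - A) W(p)ᵀ A (I - A)⁻¹ p + (I - A) 𝟙 / n`. -/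
noncomputable def percMap (n : ℕ) (C : Matrix (Fin n) (Fin n) ℝ) (a : Fin n → ℝ)
    (p : Fin n → ℝ) : Fin n → ℝ :=
  ((1 - Matrix.diagonal a) * (Wmat n C p)ᵀ * Matrix.diagonal a *
      (1 - Matrix.diagonal a)⁻¹) *ᵥ p
    + (1 / (n : ℝ)) • ((1 - Matrix.diagonal a) *ᵥ (fun _ => (1 : ℝ)))

/-- The `n`-simplex `Δ_n`. -/
def simplex (n : ℕ) : Set (Fin n → ℝ) := {x | (∀ i, 0 ≤ x i) ∧ ∑ i, x i = 1}

/-- The box `Γ_n(y, z) = {x : y ≤ x ≤ z}`. -/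
def box (n : ℕ) (y z : Fin n → ℝ) : Set (Fin n → ℝ) := {x | ∀ i, y i ≤ x i ∧ x i ≤ z i}

open Asymptotics Filter in
/-- A geometric bound on the shifted sequence gives one on the sequence itself. -/
lemma isBigO_geom_of_succ {e : ℕ → ℝ} {r : ℝ} (hr : 0 < r)
    (h : (fun s => e (s + 1)) =O[atTop] fun s => r ^ s) : e =O[atTop] fun s => r ^ s := by
  have h1 : (fun s : ℕ => r ^ s) =O[atTop] fun s => r ^ (s + 1) := by
    refine IsBigO.of_bound r⁻¹ (Eventually.of_forall fun s => le_of_eq ?_)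
    rw [Real.norm_of_nonneg (by positivity), Real.norm_of_nonneg (by positivity), pow_succ]
    field_simp
  have h2 := h.trans h1
  rw [← map_add_atTop_eq_nat 1, isBigO_map]
  exact h2

/-- The recursion `x ↦ a x ^ 2 + b` contracts towards its fixed point `L` along any trajectory that
stays in an invariant interval `[l, h]` on which the difference quotient `a (x + L)` lies in
`[0, r]`. -/
lemma quadratic_contraction {a b L l h r : ℝ} (hL : a * L ^ 2 + b = L) (hr : 0 ≤ r)
    (hinv : ∀ x, l ≤ x → x ≤ h → l ≤ a * x ^ 2 + b ∧ a * x ^ 2 + b ≤ h)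
    (hq : ∀ x, l ≤ x → x ≤ h → 0 ≤ a * (x + L) ∧ a * (x + L) ≤ r)
    {u : ℕ → ℝ} (hu : ∀ s, u (s + 1) = a * u s ^ 2 + b) (h0 : l ≤ u 0 ∧ u 0 ≤ h) (s : ℕ) :
    |u s - L| ≤ |u 0 - L| * r ^ s := by
  have hmem : ∀ s, l ≤ u s ∧ u s ≤ h := by
    intro s
    induction s with
    | zero => exact h0
    | succ k ih => rw [hu]; exact hinv _ ih.1 ih.2
  induction s with
  | zero => simp
  | succ k ih =>
    obtain ⟨hq0, hqr⟩ := hq _ (hmem k).1 (hmem k).2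
    have e : u (k + 1) - L = a * (u k + L) * (u k - L) := by
      rw [hu]; linear_combination hL
    rw [e, abs_mul, abs_of_nonneg hq0]
    calc a * (u k + L) * |u k - L| ≤ r * (|u 0 - L| * r ^ k) :=
          mul_le_mul hqr ih (abs_nonneg _) hr
      _ = |u 0 - L| * r ^ (k + 1) := by ring

/-- The perception map in coordinates, for an arbitrary influence network. -/
lemma percMap_apply (n : ℕ) (C : Matrix (Fin n) (Fin n) ℝ) (a : Fin n → ℝ)
    (ha1 : ∀ i, a i < 1) (p : Fin n → ℝ) (i : Fin n) :
    percMap n C a p i =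
      (1 - a i) * ∑ j, Wmat n C p j i * (a j * (1 - a j)⁻¹ * p j) + (1 - a i) / n := by
  have hD : (1 : Matrix (Fin n) (Fin n) ℝ) - diagonal a = diagonal (fun i => 1 - a i) := by
    rw [← diagonal_one, diagonal_sub]
  have hinv : (diagonal (fun i => 1 - a i) : Matrix (Fin n) (Fin n) ℝ)⁻¹
      = diagonal (fun i => (1 - a i)⁻¹) := by
    apply Matrix.inv_eq_right_inv
    rw [diagonal_mul_diagonal, ← diagonal_one]
    congr 1
    funext i
    exact mul_inv_cancel₀ (sub_pos.2 (ha1 i)).ne'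
  unfold percMap
  rw [hD, hinv]
  simp only [← Matrix.mulVec_mulVec, Pi.add_apply, Pi.smul_apply, mulVec_diagonal, smul_eq_mul]
  congr 1
  · rw [show ∀ (M : Matrix (Fin n) (Fin n) ℝ) v, (M *ᵥ v) i = ∑ j, M i j * v j from
      fun _ _ => rfl]
    congr 1
    refine Finset.sum_congr rfl fun j _ => ?_
    rw [transpose_apply, mulVec_diagonal, mulVec_diagonal, mul_assoc (a j)]
  · ring

lemma Wmat_apply (n : ℕ) (C : Matrix (Fin n) (Fin n) ℝ) (x : Fin n → ℝ) (i j : Fin n) :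
    Wmat n C x i j = (if i = j then x i else 0) + (1 - x i) * C i j := by
  simp only [Wmat, Matrix.add_apply, sub_mul, one_mul, Matrix.sub_apply, diagonal_mul,
    diagonal_apply]

section Star

variable {n : ℕ} [NeZero n] {C : Matrix (Fin n) (Fin n) ℝ} {a : Fin n → ℝ}

lemma percMap_leaf (ha1 : ∀ i, a i < 1)
    (hstar2 : ∀ j : Fin n, j ≠ 0 → ∀ i : Fin n, i ≠ 0 → C j i = 0) (hcenter : a 0 = 0)
    (p : Fin n → ℝ) {i : Fin n} (hi : i ≠ 0) :
    percMap n C a p i = a i * p i ^ 2 + (1 - a i) / n := by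
  rw [percMap_apply n C a ha1, Finset.sum_eq_single i]
  · have := (sub_pos.2 (ha1 i)).ne'
    rw [Wmat_apply, hstar2 i hi i hi]
    simp
    field_simp
  · intro j _ hji
    by_cases hj : j = 0
    · subst hj; simp [hcenter]
    · rw [Wmat_apply, hstar2 j hj i hi]; simp [hji]
  · simp

lemma percMap_center (ha1 : ∀ i, a i < 1)
    (hstar1 : ∀ j : Fin n, j ≠ 0 → C j 0 = 1) (hcenter : a 0 = 0) (p : Fin n → ℝ) :
    percMap n C a p 0 = 1 / n + ∑ j, a j * (1 - a j)⁻¹ * (p j - p j ^ 2) := by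
  rw [percMap_apply n C a ha1, hcenter, add_comm]
  simp only [sub_zero, one_mul]
  congr 1
  refine Finset.sum_congr rfl fun j _ => ?_
  by_cases hj : j = 0
  · subst hj; simp [hcenter]
  · rw [Wmat_apply, hstar1 j hj]; simp [hj]; ring

end Star

/-- The smaller root of `a x ^ 2 - x + (1 - a) / n`. The discriminant is positive because
`4 a (1 - a) ≤ 1 < n`, whence the multiplier `2 a L` at the root `L` is strictly below one. -/
lemma small_root {n : ℕ} (hn : 2 ≤ n) {a L : ℝ} (ha : 0 < a) (ha1 : a < 1)
    (hL : L = (1 - Real.sqrt (1 - 4 * a * (1 - a) / n)) / (2 * a)) :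
    0 ≤ L ∧ 2 * a * L < 1 ∧ a * L ^ 2 + (1 - a) / n = L := by
  have hn' : (2 : ℝ) ≤ n := by exact_mod_cast hn
  have hd0 : 0 ≤ 4 * a * (1 - a) / n :=
    div_nonneg (by nlinarith) (by linarith)
  have hd : 4 * a * (1 - a) / n < 1 := by
    rw [div_lt_one (by linarith)]; nlinarith [sq_nonneg (2 * a - 1)]
  have hs := Real.sq_sqrt (sub_nonneg.2 hd.le)
  have hs0 := Real.sqrt_pos.2 (sub_pos.2 hd)
  have hs1 : Real.sqrt (1 - 4 * a * (1 - a) / n) ≤ 1 := by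
    rw [Real.sqrt_le_one]; linarith
  set t := Real.sqrt (1 - 4 * a * (1 - a) / n)
  have h2 : 2 * a * L = 1 - t := by rw [hL]; field_simp
  refine ⟨?_, by linarith, ?_⟩
  · rw [hL]; exact div_nonneg (by linarith) (by linarith)
  · have : 4 * a * (a * L ^ 2 + (1 - a) / n - L) = 0 := by
      have ht : t = 1 - 2 * a * L := by linarith
      rw [ht] at hs
      linear_combination hs
    have := (mul_eq_zero.1 this).resolve_left (by positivity)
    linarith

open Asymptotics Filter in
/-- Corollary 1(iii): star topology with fully stubborn center node `0`;
exponential convergence of system (11) from `Γ_n(0, ν) ∪ Γ_n(μ, ν′)` to `p*`. -/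
theorem star_fully_stubborn_center_exponential_convergence
    (n : ℕ) [NeZero n] (hn : 2 ≤ n)
    (C : Matrix (Fin n) (Fin n) ℝ)
    (hC0 : ∀ i j, 0 ≤ C i j) (hCrow : ∀ i, ∑ j, C i j = 1) (hCdiag : ∀ i, C i i = 0)
    (a : Fin n → ℝ) (ha0 : ∀ i, 0 ≤ a i) (ha1 : ∀ i, a i < 1) (hane : a ≠ 0)
    (hstar1 : ∀ j : Fin n, j ≠ 0 → C j 0 = 1)
    (hstar2 : ∀ j : Fin n, j ≠ 0 → ∀ i : Fin n, i ≠ 0 → C j i = 0)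
    (hcenter : a 0 = 0)
    (pstar : Fin n → ℝ)
    (hpf : ∀ i : Fin n, i ≠ 0 → a i = 0 → pstar i = 1 / (n : ℝ))
    (hpp : ∀ i : Fin n, 0 < a i →
      pstar i = (1 - Real.sqrt (1 - 4 * a i * (1 - a i) / n)) / (2 * a i))
    (hp1 : pstar 0 = 1 / (n : ℝ) + (1 / (n : ℝ)) *
      ∑ j ∈ Finset.univ.filter (fun j => 0 < a j),
        a j * (1 - pstar j) / (1 - a j * pstar j))
    (p : ℕ → Fin n → ℝ) (hp : ∀ s, p (s + 1) = percMap n C a (p s))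
    (hp0 : p 0 ∈ box n 0 (fun i => if 0 < a i then pstar i else 1) ∪
           box n (fun i => if 0 < a i then pstar i else 0)
                 (fun i => if 0 < a i then 1 / 2 else 1)) :
    ∃ c > 0, ∃ lam ∈ Set.Ioo (0 : ℝ) 1, ∀ s : ℕ, ‖p s - pstar‖ ≤ c * lam ^ s := by
  have hn' : (2 : ℝ) ≤ n := by exact_mod_cast hn
  have hleaf : ∀ i, i ≠ 0 → ∀ s, p (s + 1) i = a i * p s i ^ 2 + (1 - a i) / n := fun i hi s => by
    rw [hp, percMap_leaf ha1 hstar2 hcenter _ hi]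
  have hroot := fun i (hi : 0 < a i) => small_root hn hi (ha1 i) (hpp i hi)
  have hne0 : ∀ i, 0 < a i → i ≠ 0 := by
    rintro i hi rfl; exact hi.ne' hcenter
  -- each partially stubborn leaf contracts at its own rate
  have hrate : ∀ i, ∃ ρ < 1, 0 ≤ ρ ∧
      (0 < a i → ∀ s, |p s i - pstar i| ≤ |p 0 i - pstar i| * ρ ^ s) := by
    intro i
    by_cases hi : 0 < a i
    swap
    · exact ⟨0, one_pos, le_rfl, fun h => absurd h hi⟩
    obtain ⟨hL0, hL1, hfix⟩ := hroot i hi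
    have hb0 : 0 ≤ (1 - a i) / (n : ℝ) := div_nonneg (by linarith [ha1 i]) (by linarith)
    rcases hp0 with h0 | h0
    · have h0 := h0 i
      simp only [hi, if_true, Pi.zero_apply] at h0
      refine ⟨2 * a i * pstar i, hL1, by positivity, fun _ =>
        quadratic_contraction hfix (by positivity) (fun x hx hxL => ⟨by positivity, ?_⟩)
          (fun x hx hxL => ⟨by positivity, ?_⟩) (hleaf i (hne0 i hi)) h0⟩
      · have : a i * x ^ 2 ≤ a i * pstar i ^ 2 := by gcongr
        linarith
      · nlinarith
    · have h0 := h0 i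
      simp only [hi, if_true] at h0
      have hLh := h0.1.trans h0.2
      refine ⟨a i, ha1 i, hi.le, fun _ =>
        quadratic_contraction hfix hi.le (fun x hx hxL => ⟨?_, ?_⟩)
          (fun x hx hxL => ⟨mul_nonneg hi.le (by linarith), by nlinarith⟩)
          (hleaf i (hne0 i hi)) h0⟩
      · have : a i * pstar i ^ 2 ≤ a i * x ^ 2 := by gcongr
        linarith
      · have h1 : (1 - a i) / (n : ℝ) ≤ (1 - a i) / 2 :=
          div_le_div_of_nonneg_left (by linarith [ha1 i]) (by norm_num) hn'
        have h2 : x ^ 2 ≤ (1 / 2) ^ 2 := pow_le_pow_left₀ (hL0.trans hx) hxL 2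
        nlinarith
  choose ρ hρ1 hρ0 hρ using hrate
  -- a common rate `r` dominating all the individual ones
  obtain ⟨r, hr, hr0, hr1⟩ : ∃ r : ℝ, (∀ i, ρ i ≤ r) ∧ 0 < r ∧ r < 1 := by
    have h1 : ∀ᶠ r in nhdsWithin (1 : ℝ) (Set.Iio 1), ∀ i, ρ i ≤ r :=
      eventually_all.2 fun i => nhdsWithin_le_nhds (Ici_mem_nhds (hρ1 i))
    have h2 : ∀ᶠ r in nhdsWithin (1 : ℝ) (Set.Iio 1), 0 < r :=
      nhdsWithin_le_nhds (Ioi_mem_nhds one_pos)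
    exact (h1.and (h2.and self_mem_nhdsWithin)).exists
  have hpart : ∀ i, 0 < a i → (fun s => p s i - pstar i) =O[atTop] fun s => r ^ s := by
    intro i hi
    refine IsBigO.of_bound |p 0 i - pstar i| (Eventually.of_forall fun s => ?_)
    rw [Real.norm_eq_abs, Real.norm_of_nonneg (by positivity)]
    exact (hρ i hi s).trans
      (mul_le_mul_of_nonneg_left (pow_le_pow_left₀ (hρ0 i) (hr i) s) (abs_nonneg _))
  have hbdd : (fun s : ℕ => r ^ s) =O[atTop] fun _ => (1 : ℝ) :=
    (tendsto_pow_atTop_nhds_zero_of_lt_one hr0.le hr1).isBigO_one ℝ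
  have hstar0 : pstar 0 = 1 / n + ∑ j, a j * (1 - a j)⁻¹ * (pstar j - pstar j ^ 2) := by
    rw [hp1, Finset.mul_sum, Finset.sum_filter]
    congr 1
    refine Finset.sum_congr rfl fun j _ => ?_
    split_ifs with hj
    · obtain ⟨hL0, hL1, hfix⟩ := hroot j hj
      have h1 : 1 - a j * pstar j ≠ 0 := by nlinarith
      have h2 := (sub_pos.2 (ha1 j)).ne'
      have h3 : (n : ℝ) ≠ 0 := by linarith
      -- the fixed-point equation, cleared of its denominator
      have h4 : (n : ℝ) * (pstar j * (1 - a j * pstar j)) = 1 - a j := by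
        have : (1 - a j) / (n : ℝ) = pstar j * (1 - a j * pstar j) := by linarith
        rw [← this]; field_simp
      field_simp
      linear_combination (-(1 - pstar j)) * h4
    · simp [le_antisymm (not_lt.1 hj) (ha0 j)]
  have hcoord : ∀ i, (fun s => p s i - pstar i) =O[atTop] fun s => r ^ s := by
    intro i
    by_cases hi : 0 < a i
    · exact hpart i hi
    refine isBigO_geom_of_succ hr0 ?_
    by_cases h0 : i = 0
    · subst h0
      have e : (fun s => p (s + 1) 0 - pstar 0) = fun s => ∑ j, a j * (1 - a j)⁻¹ *
          ((1 - 2 * pstar j) * (p s j - pstar j) - (p s j - pstar j) * (p s j - pstar j)) := by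
        funext s
        rw [hp, percMap_center ha1 hstar1 hcenter, hstar0, add_sub_add_left_eq_sub,
          ← Finset.sum_sub_distrib]
        exact Finset.sum_congr rfl fun j _ => by ring
      rw [e]
      refine IsBigO.fun_sum fun j _ => ?_
      by_cases hj : 0 < a j
      · refine IsBigO.const_mul_left (IsBigO.sub ((hpart j hj).const_mul_left _) ?_) _
        simpa using (hpart j hj).mul ((hpart j hj).trans hbdd)
      · simp [le_antisymm (not_lt.1 hj) (ha0 j), isBigO_zero]
    · have ha : a i = 0 := le_antisymm (not_lt.1 hi) (ha0 i)
      have e : (fun s => p (s + 1) i - pstar i) = fun _ => (0 : ℝ) := by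
        funext s
        rw [hleaf i h0, hpf i h0 ha, ha]; ring
      rw [e]; exact isBigO_zero _ _
  have hO : (fun s => p s - pstar) =O[atTop] fun s => r ^ s := isBigO_pi.2 hcoord
  obtain ⟨c, hc, h⟩ := bound_of_isBigO_nat_atTop hO
  refine ⟨c, hc, r, ⟨hr0, hr1⟩, fun s => ?_⟩
  simpa [abs_of_pos hr0] using h (pow_pos hr0 s).ne'
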